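/- arXiv:1803.06521 — 3 statements merged into one kernel-verified Lean document; each statement's English description precedes it below -/
import Mathlib

section
/- Let n, k ≥ 1 and let (π, m) realize a distribution D as a mixture of k product distributions on {0,1}^n, with π_j > 0 for all j ∈ [k] and with the moment matrix M of m having rank k. Let T_1, …, T_r ⊆ [n] and J = T_1 ∪ ⋯ ∪ T_r, and suppose the submatrix of M consisting of the rows M_S for S ⊆ [n]∖J has rank k. If coefficients α_1, …, α_r ∈ ℝ satisfy Σ_{ℓ=1}^r α_ℓ · E_D[x_{S ∪ T_ℓ}] = 0 for every S ⊆ [n]∖J, then Σ_{ℓ=1}^r α_ℓ · M_{T_ℓ} = 0. -/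
/-- The density of the mixture of `k` product distributions on `{0,1}^n` realized by mixing
weights `π` and marginals matrix `m`. -/
noncomputable def mixtureDensity {n k : ℕ} (π : Fin k → ℝ) (m : Fin n → Fin k → ℝ) :
    (Fin n → Bool) → ℝ :=
  fun x => ∑ j, π j * ∏ i, (if x i then m i j else 1 - m i j)

/-- The `S`-moment `E_D[x_S]` of a density `D` on `{0,1}^n`. -/
noncomputable def momentOf {n : ℕ} (D : (Fin n → Bool) → ℝ) (S : Finset (Fin n)) : ℝ :=
  ∑ x ∈ Finset.univ.filter (fun x : Fin n → Bool => ∀ i ∈ S, x i = true), D x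

theorem momentOf_mixture {n k : ℕ} (π : Fin k → ℝ) (m : Fin n → Fin k → ℝ)
    (S : Finset (Fin n)) :
    momentOf (mixtureDensity π m) S = ∑ j, π j * ∏ i ∈ S, m i j := by
  unfold momentOf mixtureDensity
  rw [Finset.sum_comm]
  refine Finset.sum_congr rfl fun j _ => ?_
  rw [← Finset.mul_sum]
  congr 1
  have h : (Finset.univ.filter (fun x : Fin n → Bool => ∀ i ∈ S, x i = true)) =
      Fintype.piFinset (fun i => if i ∈ S then ({true} : Finset Bool) else Finset.univ) := by
    ext x
    simp only [Finset.mem_filter, Finset.mem_univ, true_and, Fintype.mem_piFinset]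
    refine forall_congr' fun i => ?_
    by_cases hi : i ∈ S <;> simp [hi]
  rw [h, ← Finset.prod_univ_sum
    (fun i => if i ∈ S then ({true} : Finset Bool) else Finset.univ)
    (fun i b => if b = true then m i j else 1 - m i j)]
  rw [← Finset.prod_subset (Finset.subset_univ S)]
  · refine Finset.prod_congr rfl fun i hi => ?_
    simp [hi]
  · intro i _ hi
    simp [hi]

theorem eq_zero_of_rank {ι : Type*} [Fintype ι] {k : ℕ} (A : Matrix ι (Fin k) ℝ)
    (h : A.rank = k) (v : Fin k → ℝ) (hv : A.mulVec v = 0) : v = 0 := by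
  have h1 := LinearMap.finrank_range_add_finrank_ker A.mulVecLin
  have h2 : Module.finrank ℝ (LinearMap.range A.mulVecLin) = k := h
  rw [h2, Module.finrank_fin_fun] at h1
  have h3 : Module.finrank ℝ (LinearMap.ker A.mulVecLin) = 0 := by omega
  have h4 := Submodule.finrank_eq_zero.mp h3
  exact (LinearMap.ker_eq_bot'.mp h4) v hv

/-- in a full rank realization with all mixing weights positive, if the
submatrix of `M` of rows indexed by subsets of `[n]∖J` has rank `k`, then a linear relation
among the columns `(E_D[x_{S∪T_ℓ}])_{S ⊆ [n]∖J}` implies the same linear relation among the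
rows `M_{T_ℓ}` of the moment matrix. -/
theorem stmt_3 (n k : ℕ) (hn : 1 ≤ n) (hk : 1 ≤ k)
    (π : Fin k → ℝ) (m : Fin n → Fin k → ℝ)
    (hπ0 : ∀ j, 0 < π j) (hπ1 : ∑ j, π j = 1)
    (hm : ∀ i j, m i j ∈ Set.Icc (0:ℝ) 1)
    (D : (Fin n → Bool) → ℝ) (hD : ∀ x, D x = mixtureDensity π m x)
    (hrank : (Matrix.of fun (S : Finset (Fin n)) (j : Fin k) => ∏ i ∈ S, m i j).rank = k)
    (r : ℕ) (T : Fin r → Finset (Fin n))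
    (hrank2 : (Matrix.of
        fun (S : {S : Finset (Fin n) // Disjoint S (Finset.univ.biUnion T)}) (j : Fin k) =>
          ∏ i ∈ S.1, m i j).rank = k)
    (α : Fin r → ℝ)
    (hα : ∀ S : Finset (Fin n), Disjoint S (Finset.univ.biUnion T) →
      ∑ ℓ, α ℓ * momentOf D (S ∪ T ℓ) = 0) :
    ∀ j : Fin k, ∑ ℓ, α ℓ * ∏ i ∈ T ℓ, m i j = 0 := by
  have hD' : D = mixtureDensity π m := funext hD
  subst hD'
  have key := eq_zero_of_rank _ hrank2
    (fun j => π j * ∑ ℓ, α ℓ * ∏ i ∈ T ℓ, m i j) (by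
      funext S
      have h := hα S.1 S.2
      rw [Pi.zero_apply, ← h]
      simp only [Matrix.mulVec, dotProduct, Matrix.of_apply, momentOf_mixture, Finset.mul_sum]
      rw [Finset.sum_comm]
      refine Finset.sum_congr rfl fun l _ => Finset.sum_congr rfl fun j _ => ?_
      have hd : Disjoint S.1 (T l) :=
        S.2.mono_right (Finset.subset_biUnion_of_mem T (Finset.mem_univ l))
      rw [Finset.prod_union hd]
      ring)
  intro j
  exact (mul_eq_zero.mp (congrFun key j)).resolve_left (hπ0 j).ne'
end

section
/- There exists an absolute constant C > 0 such that the following holds for all n ≥ 1, all k₁, k₂ ≥ 1 with k := k₁ + k₂ ≥ 2, and all ε ∈ (0, 1]. If D₁ is a mixture of k₁ subcubes and D₂ is a mixture of k₂ subcubes on {0,1}^n with d_TV(D₁, D₂) > ε, then there exists S ⊆ [n] with |S| < 2·log₂ k such that |E_{D₁}[x_S] − E_{D₂}[x_S]| > ε · k^{−C·k}. -/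
lemma cube_lower {n : ℕ} {κ : Type} [Fintype κ] [DecidableEq κ] (m : Fin n → κ → ℝ)
    (hm : ∀ i j, m i j = 0 ∨ m i j = 1/2 ∨ m i j = 1) (S : Finset (Fin n)) :
    ∀ (J : Finset κ) (w : κ → ℝ),
      (∀ T, T ⊂ S → ∑ j ∈ J, w j * ∏ i ∈ T, m i j = 0) →
      ∑ j ∈ J, w j * ∏ i ∈ S, m i j ≠ 0 → 3 ^ S.card ≤ 2 ^ S.card * J.card := by
  induction S using Finset.induction_on with
  | empty =>
    intro J w _ h
    have : J.Nonempty := by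
      by_contra hJ
      rw [Finset.not_nonempty_iff_eq_empty] at hJ
      simp [hJ] at h
    simpa using this.card_pos
  | insert a S ha ih =>
    intro J w h0 h1
    have hI : ∀ T, T ⊂ S → insert a T ⊂ insert a S := by
      intro T hT
      refine Finset.ssubset_iff_subset_ne.2 ⟨Finset.insert_subset_insert _ hT.1, ?_⟩
      intro he
      have haT : a ∉ T := fun h => ha (hT.1 h)
      have := congrArg Finset.card he
      rw [Finset.card_insert_of_notMem ha, Finset.card_insert_of_notMem haT] at this
      have := Finset.card_lt_card hT
      omega
    have hS : S ⊂ insert a S := Finset.ssubset_insert ha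
    have e : ∀ (c d : ℝ) (P : κ → Prop) [DecidablePred P], (∀ j, ¬ P j → c + d * m a j = 0) →
        ∀ T, a ∉ T → ∑ j ∈ J with P j, (w j * (c + d * m a j)) * ∏ i ∈ T, m i j
          = c * ∑ j ∈ J, w j * ∏ i ∈ T, m i j + d * ∑ j ∈ J, w j * ∏ i ∈ insert a T, m i j := by
      intro c d P _ hP T hT
      rw [Finset.sum_filter, Finset.mul_sum, Finset.mul_sum, ← Finset.sum_add_distrib]
      refine Finset.sum_congr rfl fun j _ => ?_
      rw [Finset.prod_insert hT]
      split_ifs with h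
      · ring
      · have := hP j h
        linear_combination (-(w j * ∏ i ∈ T, m i j)) * this
    have key : ∀ (c d : ℝ) (P : κ → Prop) [DecidablePred P], d ≠ 0 →
        (∀ j, ¬ P j → c + d * m a j = 0) →
        3 ^ S.card ≤ 2 ^ S.card * (J.filter P).card := by
      intro c d P _ hd hP
      refine ih (J.filter P) (fun j => w j * (c + d * m a j)) ?_ ?_
      · intro T hT
        rw [e c d P hP T (fun h => ha (hT.1 h)), h0 T (hT.trans hS), h0 _ (hI T hT)]
        simp
      · rw [e c d P hP S ha, h0 S hS]
        simpa using ⟨hd, h1⟩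
    classical
    have k0 := key 0 1 (fun j => m a j ≠ 0) (by norm_num) (by intro j h; push Not at h; simp [h])
    have k1 := key 1 (-1) (fun j => m a j ≠ 1) (by norm_num) (by intro j h; push Not at h; simp [h])
    have k2 := key (-1) 2 (fun j => m a j ≠ 1/2) (by norm_num)
      (by intro j h; push Not at h; rw [h]; norm_num)
    have hc : (J.filter (fun j => m a j ≠ 0)).card + (J.filter (fun j => m a j ≠ 1)).card
        + (J.filter (fun j => m a j ≠ 1/2)).card ≤ 2 * J.card := by
      rw [Finset.card_filter, Finset.card_filter, Finset.card_filter, ← Finset.sum_add_distrib,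
        ← Finset.sum_add_distrib, mul_comm, ← smul_eq_mul]
      refine Finset.sum_le_card_nsmul _ _ _ fun j _ => ?_
      rcases hm a j with h | h | h <;> rw [h] <;> norm_num
    rw [Finset.card_insert_of_notMem ha, pow_succ, pow_succ]
    have := Nat.mul_le_mul_left (2 ^ S.card) hc
    nlinarith

lemma all_vanish {n : ℕ} {κ : Type} [Fintype κ] [DecidableEq κ] (m : Fin n → κ → ℝ)
    (hm : ∀ i j, m i j = 0 ∨ m i j = 1/2 ∨ m i j = 1) (hk : 2 ≤ Fintype.card κ) (w : κ → ℝ)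
    (h : ∀ T : Finset (Fin n), 2 ^ T.card < (Fintype.card κ) ^ 2 →
      ∑ j, w j * ∏ i ∈ T, m i j = 0) (S : Finset (Fin n)) :
    ∑ j, w j * ∏ i ∈ S, m i j = 0 := by
  induction S using Finset.strongInduction with
  | H S ih =>
    by_cases hS : 2 ^ S.card < (Fintype.card κ) ^ 2
    · exact h S hS
    by_contra hne
    have h3 := cube_lower m hm S Finset.univ w ih hne
    rw [Finset.card_univ] at h3
    push Not at hS
    have h4 : (3 ^ S.card) ^ 2 ≤ (2 ^ S.card * Fintype.card κ) ^ 2 := Nat.pow_le_pow_left h3 2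
    have h5 : 9 ^ S.card ≤ 8 ^ S.card := by
      calc 9 ^ S.card = (3 ^ S.card) ^ 2 := by rw [← pow_mul, mul_comm, pow_mul]; norm_num
        _ ≤ _ := h4
        _ = (2 ^ S.card) ^ 2 * (Fintype.card κ) ^ 2 := by ring
        _ ≤ (2 ^ S.card) ^ 2 * 2 ^ S.card := Nat.mul_le_mul_left _ hS
        _ = (2 ^ S.card) ^ 3 := by ring
        _ = 8 ^ S.card := by rw [← pow_mul, mul_comm, pow_mul]; norm_num
    have h6 : S.card = 0 := by
      by_contra h0
      exact absurd (Nat.pow_lt_pow_left (by norm_num : 8 < 9) h0) (by omega)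
    rw [h6] at hS
    nlinarith

/-- signed mixture density -/
noncomputable def sDens {n : ℕ} {κ : Type} [Fintype κ] (w : κ → ℝ) (m : Fin n → κ → ℝ)
    (x : Fin n → Bool) : ℝ :=
  ∑ j, w j * ∏ i, (if x i then m i j else 1 - m i j)

lemma sDens_zero {n : ℕ} {κ : Type} [Fintype κ] (w : κ → ℝ) (m : Fin n → κ → ℝ)
    (h : ∀ S : Finset (Fin n), ∑ j, w j * ∏ i ∈ S, m i j = 0) (x : Fin n → Bool) :
    sDens w m x = 0 := by
  have key : ∀ B A : Finset (Fin n), Disjoint A B →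
      ∑ j, w j * ((∏ i ∈ A, m i j) * ∏ i ∈ B, (1 - m i j)) = 0 := by
    intro B
    induction B using Finset.induction_on with
    | empty => intro A _; simpa using h A
    | insert a B ha ih =>
      intro A hA
      rw [Finset.disjoint_insert_right] at hA
      have h1 := ih A hA.2
      have h2 := ih (insert a A) (Finset.disjoint_insert_left.2 ⟨ha, hA.2⟩)
      have h3 := congrArg₂ (· - ·) h1 h2
      simp only [sub_zero] at h3
      rw [← Finset.sum_sub_distrib] at h3
      rw [← h3]
      refine Finset.sum_congr rfl fun j _ => ?_
      rw [Finset.prod_insert ha, Finset.prod_insert hA.1]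
      ring
  have := key (Finset.univ.filter fun i => ¬ x i = true) (Finset.univ.filter fun i => x i = true)
    (Finset.disjoint_filter_filter_not _ _ _)
  unfold sDens
  rw [← this]
  refine Finset.sum_congr rfl fun j _ => ?_
  rw [Finset.prod_ite]

lemma prod_moment {n : ℕ} (p : Fin n → ℝ) (S : Finset (Fin n)) :
    ∑ x ∈ Finset.univ.filter (fun x : Fin n → Bool => ∀ i ∈ S, x i = true),
      ∏ i, (if x i then p i else 1 - p i) = ∏ i ∈ S, p i := by
  have : Finset.univ.filter (fun x : Fin n → Bool => ∀ i ∈ S, x i = true)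
      = Fintype.piFinset (fun i => if i ∈ S then {true} else Finset.univ) := by
    ext x
    simp only [Finset.mem_filter, Finset.mem_univ, true_and, Fintype.mem_piFinset]
    refine forall_congr' fun i => ?_
    split_ifs with h <;> simp [h]
  rw [this, ← Finset.prod_univ_sum (fun i => if i ∈ S then {true} else Finset.univ)
      (fun i b => if b = true then p i else 1 - p i),
    ← Finset.prod_subset (Finset.subset_univ S)]
  · refine Finset.prod_congr rfl fun i hi => ?_
    simp [hi]
  · intro i _ hi
    simp [hi]

lemma moment_mix {n k : ℕ} (w : Fin k → ℝ) (m : Fin n → Fin k → ℝ) (S : Finset (Fin n)) :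
    momentOf (mixtureDensity w m) S = ∑ j, w j * ∏ i ∈ S, m i j := by
  unfold momentOf mixtureDensity
  rw [Finset.sum_comm]
  refine Finset.sum_congr rfl fun j _ => ?_
  rw [← Finset.mul_sum, prod_moment (fun i => m i j)]

lemma sDens_l1 {n : ℕ} {κ : Type} [Fintype κ] (w : κ → ℝ) (m : Fin n → κ → ℝ)
    (hm : ∀ i j, 0 ≤ m i j ∧ m i j ≤ 1) : ∑ x, |sDens w m x| ≤ ∑ j, |w j| := by
  have h1 : ∀ (j : κ) (x : Fin n → Bool), 0 ≤ ∏ i, (if x i = true then m i j else 1 - m i j) := by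
    intro j x
    refine Finset.prod_nonneg fun i _ => ?_
    have := hm i j
    split_ifs <;> linarith
  calc ∑ x, |sDens w m x|
      ≤ ∑ x : Fin n → Bool, ∑ j, |w j| * ∏ i, (if x i then m i j else 1 - m i j) := by
        refine Finset.sum_le_sum fun x _ => ?_
        refine (Finset.abs_sum_le_sum_abs _ _).trans (le_of_eq ?_)
        refine Finset.sum_congr rfl fun j _ => ?_
        rw [abs_mul, abs_of_nonneg (h1 j x)]
    _ = ∑ j, |w j| := by
        rw [Finset.sum_comm]
        refine Finset.sum_congr rfl fun j _ => ?_
        have := prod_moment (fun i => m i j) ∅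
        simp only [Finset.notMem_empty, false_imp_iff, implies_true, Finset.filter_true,
          Finset.prod_empty] at this
        rw [← Finset.mul_sum, this, mul_one]

lemma lin_bound {ι κ : Type} [Fintype ι] [Fintype κ] (A : Matrix ι κ ℝ)
    (hA : ∀ i j, |A i j| ≤ 1) (N : ℕ) (hN : 1 ≤ N) (hz : ∀ i j, ∃ z : ℤ, (N : ℝ) * A i j = z)
    (w : κ → ℝ) (η : ℝ) (hη : 0 < η) (hb : ∀ i, |∑ j, A i j * w j| ≤ η) :
    ∃ w' : κ → ℝ, (∀ i, ∑ j, A i j * w' j = ∑ j, A i j * w j) ∧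
      ∀ j, |w' j| ≤ η * ((Fintype.card κ).factorial * (N : ℝ) ^ Fintype.card κ) := by
  classical
  obtain ⟨κ', a, ha, hsp, hli⟩ := exists_linearIndependent' ℝ (fun j : κ => fun i => A i j)
  have : Finite κ' := Finite.of_injective a ha
  have := Fintype.ofFinite κ'
  have hmem : (fun i => ∑ j, A i j * w j) ∈
      Submodule.span ℝ (Set.range ((fun j : κ => fun i => A i j) ∘ a)) := by
    rw [hsp, Submodule.mem_span_range_iff_exists_fun]
    refine ⟨w, ?_⟩
    ext i
    simp [Finset.sum_apply, mul_comm]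
  rw [Submodule.mem_span_range_iff_exists_fun] at hmem
  obtain ⟨μ, hμ⟩ := hmem
  have hμ' : ∀ i, ∑ j, A i (a j) * μ j = ∑ j, A i j * w j := by
    intro i
    have := congrFun hμ i
    simpa [Finset.sum_apply, mul_comm] using this
  let A' : Matrix ι κ' ℝ := fun i j => A i (a j)
  obtain ⟨ι', b, hbi, hsp', hli'⟩ := exists_linearIndependent' ℝ A'.row
  have : Finite ι' := Finite.of_injective b hbi
  have := Fintype.ofFinite ι'
  have hcard : Fintype.card κ' = Fintype.card ι' := by
    have h1 : A'.rank = Fintype.card κ' := by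
      rw [← Matrix.rank_transpose]
      exact LinearIndependent.rank_matrix (M := A'.transpose) hli
    have h2 := linearIndependent_iff_card_eq_finrank_span.mp hli'
    rw [h2, Set.finrank, hsp', ← h1, Matrix.rank_eq_finrank_span_row]
  let e : κ' ≃ ι' := Fintype.equivOfCardEq hcard
  let B : Matrix κ' κ' ℝ := fun i j => A (b (e i)) (a j)
  have hB : IsUnit B := by
    rw [← Matrix.linearIndependent_rows_iff_isUnit]
    exact hli'.comp e e.injective
  have hdet : B.det ≠ 0 := ((Matrix.isUnit_iff_isUnit_det B).1 hB).ne_zero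
  have hcard' : Fintype.card κ' ≤ Fintype.card κ := Fintype.card_le_of_injective a ha
  -- lower bound on the determinant
  choose z hz using hz
  have hlow : 1 ≤ (N : ℝ) ^ Fintype.card κ' * |B.det| := by
    have h1 : ((N : ℝ) • B).det = ((Matrix.of fun i j => z (b (e i)) (a j) : Matrix κ' κ' ℤ).det : ℝ) := by
      rw [Int.cast_det]
      congr 1
      ext i j
      exact hz _ _
    rw [Matrix.det_smul] at h1
    have h2 : (Matrix.of fun i j => z (b (e i)) (a j) : Matrix κ' κ' ℤ).det ≠ 0 := by
      intro h0
      rw [h0, Int.cast_zero] at h1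
      have hN0 : (N : ℝ) ≠ 0 := by positivity
      exact mul_ne_zero (pow_ne_zero _ hN0) hdet h1
    have h3 := Int.one_le_abs h2
    have h4 : (1 : ℝ) ≤ |((Matrix.of fun i j => z (b (e i)) (a j) : Matrix κ' κ' ℤ).det : ℝ)| := by
      exact_mod_cast h3
    rw [← h1, abs_mul, abs_of_nonneg (by positivity : (0:ℝ) ≤ (N : ℝ) ^ Fintype.card κ')] at h4
    exact h4
  have hbound : ∀ j, |μ j| ≤ η * ((Fintype.card κ).factorial * (N : ℝ) ^ Fintype.card κ) := by
    intro j
    have h1 : B.det * (η⁻¹ * μ j) = (B.updateCol j (η⁻¹ • B.mulVec μ)).det := by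
      rw [← Matrix.cramer_apply, Matrix.cramer_eq_adjugate_mulVec, Matrix.mulVec_smul,
        Matrix.mulVec_mulVec, Matrix.adjugate_mul, Matrix.smul_mulVec, Matrix.one_mulVec]
      simp only [Pi.smul_apply, smul_eq_mul]
      ring
    have h2 : |(B.updateCol j (η⁻¹ • B.mulVec μ)).det| ≤
        (Fintype.card κ').factorial • (1 : ℝ) ^ Fintype.card κ' := by
      refine Matrix.det_le (abv := AbsoluteValue.abs) fun i l => ?_
      simp only [AbsoluteValue.abs_apply]
      rw [Matrix.updateCol_apply]
      split_ifs
      · simp only [Pi.smul_apply, smul_eq_mul, abs_mul, abs_inv, abs_of_pos hη]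
        rw [inv_mul_le_iff₀ hη, mul_one]
        have := hb (b (e i))
        rw [← hμ'] at this
        exact this
      · exact hA _ _
    rw [← h1, one_pow, nsmul_eq_mul, mul_one, abs_mul, abs_mul, abs_inv, abs_of_pos hη] at h2
    have h3 : η⁻¹ * |μ j| ≤ (Fintype.card κ).factorial * (N : ℝ) ^ Fintype.card κ := by
      calc η⁻¹ * |μ j| = 1 * (η⁻¹ * |μ j|) := by ring
        _ ≤ ((N : ℝ) ^ Fintype.card κ' * |B.det|) * (η⁻¹ * |μ j|) := by gcongr
        _ = (N : ℝ) ^ Fintype.card κ' * (|B.det| * (η⁻¹ * |μ j|)) := by ring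
        _ ≤ (N : ℝ) ^ Fintype.card κ' * (Fintype.card κ').factorial := by gcongr
        _ ≤ (N : ℝ) ^ Fintype.card κ * (Fintype.card κ).factorial := by
            have : (1:ℝ) ≤ N := by exact_mod_cast hN
            gcongr
        _ = _ := by ring
    rwa [inv_mul_le_iff₀ hη] at h3
  refine ⟨Function.extend a μ 0, ?_, ?_⟩
  · intro i
    rw [← hμ' i]
    symm
    refine Fintype.sum_of_injective a ha _ _ ?_ ?_
    · intro j hj
      rw [Function.extend_apply' _ _ _ (by simpa using hj)]
      simp
    · intro j
      rw [ha.extend_apply]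
  · intro j
    by_cases hj : ∃ l, a l = j
    · obtain ⟨l, rfl⟩ := hj
      rw [ha.extend_apply]
      exact hbound l
    · rw [Function.extend_apply' _ _ _ hj]
      simp only [Pi.zero_apply, abs_zero]
      positivity

lemma sDens_bound {n : ℕ} {κ : Type} [Fintype κ] [DecidableEq κ] (m : Fin n → κ → ℝ)
    (hm : ∀ i j, m i j = 0 ∨ m i j = 1/2 ∨ m i j = 1) (hk : 2 ≤ Fintype.card κ) (w : κ → ℝ)
    (η : ℝ) (hη : 0 < η)
    (h : ∀ T : Finset (Fin n), 2 ^ T.card < (Fintype.card κ) ^ 2 →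
      |∑ j, w j * ∏ i ∈ T, m i j| ≤ η) :
    ∑ x, |sDens w m x| ≤ η * (Fintype.card κ : ℝ) ^ (4 * Fintype.card κ) := by
  set k := Fintype.card κ with hkdef
  have hm01 : ∀ i j, 0 ≤ m i j ∧ m i j ≤ 1 := by
    intro i j
    rcases hm i j with h | h | h <;> rw [h] <;> norm_num
  let A : Matrix {T : Finset (Fin n) // 2 ^ T.card < k ^ 2} κ ℝ := fun T j => ∏ i ∈ T.1, m i j
  have hk2 : k ^ 2 ≠ 0 := by positivity
  obtain ⟨w', hw', hb⟩ := lin_bound A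
    (by
      intro T j
      have h0 : 0 ≤ A T j := Finset.prod_nonneg fun i _ => (hm01 i j).1
      rw [abs_of_nonneg h0]
      exact Finset.prod_le_one (fun i _ => (hm01 i j).1) fun i _ => (hm01 i j).2)
    (2 ^ Nat.log 2 (k ^ 2)) Nat.one_le_two_pow
    (by
      intro T j
      have hT : T.1.card ≤ Nat.log 2 (k ^ 2) :=
        (Nat.le_log_iff_pow_le (by norm_num) hk2).2 T.2.le
      obtain ⟨d, hd⟩ := Nat.exists_eq_add_of_le hT
      have h2 : ∀ i, ∃ z : ℤ, 2 * m i j = z := by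
        intro i
        rcases hm i j with h | h | h
        · exact ⟨0, by rw [h]; norm_num⟩
        · exact ⟨1, by rw [h]; norm_num⟩
        · exact ⟨2, by rw [h]; norm_num⟩
      choose z hz using h2
      refine ⟨2 ^ d * ∏ i ∈ T.1, z i, ?_⟩
      rw [hd]
      push_cast
      simp only [← hz, A]
      rw [Finset.prod_mul_distrib, Finset.prod_const]
      ring)
    w η hη (by
      intro T
      have := h T.1 T.2
      simpa only [A, mul_comm] using this)
  have heq : ∀ x, sDens w m x = sDens w' m x := by
    intro x
    have := sDens_zero (fun j => w j - w' j) m (all_vanish m hm hk _ (by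
      intro T hT
      have := hw' ⟨T, hT⟩
      simp only [sub_mul, Finset.sum_sub_distrib]
      rw [sub_eq_zero]
      simpa only [A, mul_comm] using this.symm)) x
    unfold sDens at this ⊢
    simp only [sub_mul, Finset.sum_sub_distrib] at this
    linarith
  simp only [heq]
  refine (sDens_l1 w' m hm01).trans ?_
  have hk1 : (1:ℝ) ≤ k := by exact_mod_cast (by omega : 1 ≤ k)
  calc ∑ j, |w' j| ≤ ∑ j : κ, η * (k.factorial * ((2 ^ Nat.log 2 (k ^ 2) : ℕ) : ℝ) ^ k) :=
        Finset.sum_le_sum fun j _ => hb j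
    _ = k * (η * (k.factorial * ((2 ^ Nat.log 2 (k ^ 2) : ℕ) : ℝ) ^ k)) := by
        rw [Finset.sum_const, Finset.card_univ, nsmul_eq_mul]
    _ ≤ k * (η * ((k:ℝ) ^ k * ((k:ℝ) ^ 2) ^ k)) := by
        gcongr
        · exact_mod_cast Nat.factorial_le_pow k
        · exact_mod_cast Nat.pow_log_le_self 2 hk2
    _ = η * (k:ℝ) ^ (3 * k + 1) := by ring
    _ ≤ η * (k:ℝ) ^ (4 * k) := by
        have h43 : 3 * k + 1 ≤ 4 * k := by omega
        gcongr

/-- robust identifiability for mixtures of subcubes. There is an absolute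
constant `C > 0` such that any two mixtures of `k₁` and `k₂` subcubes that are `ε`-far in
total variation distance differ by more than `ε·k^{-Ck}` (with `k = k₁+k₂`) on some moment
of degree less than `2·log₂ k`. -/
theorem stmt_9 : ∃ C : ℝ, 0 < C ∧
    ∀ (n k₁ k₂ : ℕ), 1 ≤ n → 1 ≤ k₁ → 1 ≤ k₂ →
    ∀ ε : ℝ, 0 < ε → ε ≤ 1 →
    ∀ (π₁ : Fin k₁ → ℝ) (m₁ : Fin n → Fin k₁ → ℝ)
      (π₂ : Fin k₂ → ℝ) (m₂ : Fin n → Fin k₂ → ℝ),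
      (∀ j, 0 ≤ π₁ j) → (∑ j, π₁ j = 1) →
      (∀ i j, m₁ i j = 0 ∨ m₁ i j = 1/2 ∨ m₁ i j = 1) →
      (∀ j, 0 ≤ π₂ j) → (∑ j, π₂ j = 1) →
      (∀ i j, m₂ i j = 0 ∨ m₂ i j = 1/2 ∨ m₂ i j = 1) →
      ε < (1/2) * ∑ x : Fin n → Bool,
        |mixtureDensity π₁ m₁ x - mixtureDensity π₂ m₂ x| →
      ∃ S : Finset (Fin n), (S.card : ℝ) < 2 * Real.logb 2 ((k₁ : ℝ) + k₂) ∧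
        ε * ((k₁ : ℝ) + k₂) ^ (-(C * ((k₁ : ℝ) + k₂)))
          < |momentOf (mixtureDensity π₁ m₁) S - momentOf (mixtureDensity π₂ m₂) S| := by
  refine ⟨4, by norm_num, ?_⟩
  intro n k₁ k₂ _ hk₁ hk₂ ε hε _ π₁ m₁ π₂ m₂ _ _ hm₁ _ _ hm₂ htv
  by_contra hcon
  push Not at hcon
  let m : Fin n → (Fin k₁ ⊕ Fin k₂) → ℝ := fun i => Sum.elim (m₁ i) (m₂ i)
  let w : (Fin k₁ ⊕ Fin k₂) → ℝ := Sum.elim π₁ (fun j => - π₂ j)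
  have hcard : Fintype.card (Fin k₁ ⊕ Fin k₂) = k₁ + k₂ := by simp
  have hkpos : (0:ℝ) < (k₁ : ℝ) + k₂ := by
    have : (1:ℝ) ≤ k₁ := by exact_mod_cast hk₁
    positivity
  have hb := sDens_bound m (by
      rintro i (j | j)
      · exact hm₁ i j
      · exact hm₂ i j) (by rw [hcard]; omega) w
    (ε * ((k₁ : ℝ) + k₂) ^ (-(4 * ((k₁ : ℝ) + k₂)))) (by positivity) (by
      intro T hT
      rw [hcard] at hT
      have h1 := hcon T (by
        have h2 : (2:ℝ) ^ (T.card : ℝ) < ((k₁ : ℝ) + k₂) ^ 2 := by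
          rw [Real.rpow_natCast]; exact_mod_cast hT
        rw [← Real.lt_logb_iff_rpow_lt (by norm_num) (by positivity), Real.logb_pow] at h2
        exact_mod_cast h2)
      rw [moment_mix, moment_mix] at h1
      simpa [m, w, Fintype.sum_sum_type, ← sub_eq_add_neg] using h1)
  have hs : ∀ x, sDens w m x = mixtureDensity π₁ m₁ x - mixtureDensity π₂ m₂ x := by
    intro x
    simp [sDens, mixtureDensity, m, w, Fintype.sum_sum_type, ← sub_eq_add_neg]
  simp only [hs] at hb
  have hp : ((k₁ : ℝ) + k₂) ^ (-(4 * ((k₁ : ℝ) + k₂))) * ((k₁ : ℝ) + k₂) ^ (4 * (k₁ + k₂)) = 1 := by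
    rw [← Real.rpow_natCast, ← Real.rpow_add hkpos]
    push_cast
    simp
  rw [hcard] at hb
  push_cast at hb
  rw [mul_assoc, hp, mul_one] at hb
  linarith
end

section
/- For every m ≥ 1 such that m + 1 is prime, there exists a matrix W ∈ [0,1]^{m×m²} such that the mixture of k = m² product distributions on {0,1}^m with uniform mixing weights π_j = 1/m² and marginals matrix W matches the uniform distribution on all moments of degree less than m but differs noticeably on the top moment: Σ_{j=1}^{m²} (1/m²) ∏_{i∈S} W_{i,j} = 2^{−|S|} for every S ⊆ [m] with |S| < m, while | Σ_{j=1}^{m²} (1/m²) ∏_{i=1}^m W_{i,j} − 2^{−m} | ≥ (2m)^{−2m}. -/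
open Polynomial in
lemma interp_pow {m : ℕ} (x : Fin m → ℝ) (hx : Function.Injective x) (s : ℕ) (hs : s < m) :
    ∑ b, C (x b ^ s) * Lagrange.basis Finset.univ x b = (X : ℝ[X]) ^ s := by
  have h := Lagrange.eq_interpolate (s := Finset.univ) (v := x) (f := (X : ℝ[X]) ^ s)
    hx.injOn (by simpa using hs)
  rw [Lagrange.interpolate_apply] at h
  rw [h]
  simp

open Polynomial in
/-- Fekete points on `[-1,1]`. -/
lemma exists_fekete (m : ℕ) : ∃ x : Fin m → ℝ, Function.Injective x ∧
    (∀ b, |x b| ≤ 1) ∧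
    ∀ b, ∀ t ∈ Set.Icc (-1 : ℝ) 1, |(Lagrange.basis Finset.univ x b).eval t| ≤ 1 := by
  have hK : IsCompact (Set.pi Set.univ (fun _ : Fin m => Set.Icc (-1 : ℝ) 1)) :=
    isCompact_univ_pi (fun _ => isCompact_Icc)
  have hcont : Continuous (fun x : Fin m → ℝ => |(Matrix.vandermonde x).det|) := by
    refine Continuous.abs (Continuous.matrix_det ?_)
    refine continuous_matrix (fun i j => ?_)
    simp only [Matrix.vandermonde_apply]
    fun_prop
  obtain ⟨x, hxK, hmax⟩ := hK.exists_isMaxOn ⟨fun _ => 0, fun _ _ => by simp⟩ hcont.continuousOn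
  have hmax' := fun y hy => isMaxOn_iff.mp hmax y hy
  have hxb : ∀ b, x b ∈ Set.Icc (-1 : ℝ) 1 := fun b => hxK b (Set.mem_univ b)
  have hpos : (Matrix.vandermonde x).det ≠ 0 := by
    have h1 := hmax' (fun i : Fin m => 1 / ((i : ℝ) + 1)) (by
      intro i _
      refine ⟨?_, ?_⟩
      · have : (0:ℝ) ≤ 1 / ((i : ℝ) + 1) := by positivity
        linarith
      · rw [div_le_one (by positivity)]
        have : (0:ℝ) ≤ (i : ℝ) := by positivity
        linarith)
    have h2 : (Matrix.vandermonde (fun i : Fin m => 1 / ((i : ℝ) + 1))).det ≠ 0 := by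
      rw [Matrix.det_vandermonde_ne_zero_iff]
      intro i j hij
      have hi : ((i : ℝ) + 1) ≠ 0 := by positivity
      have hj : ((j : ℝ) + 1) ≠ 0 := by positivity
      simp only [one_div, inv_inj, add_left_inj, Nat.cast_inj] at hij
      exact Fin.ext hij
    have h3 := abs_pos.mpr h2
    exact abs_pos.mp (lt_of_lt_of_le h3 h1)
  have hinj : Function.Injective x := Matrix.det_vandermonde_ne_zero_iff.mp hpos
  refine ⟨x, hinj, fun b => abs_le.mpr (hxb b), fun b t ht => ?_⟩
  have hup := hmax' (Function.update x b t) (by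
    intro i _
    by_cases h : i = b
    · subst h; simpa using ht
    · simpa [h] using hxb i)
  have hrow : Matrix.vandermonde (Function.update x b t) =
      (Matrix.vandermonde x).updateRow b
        (∑ c, ((Lagrange.basis Finset.univ x c).eval t) • (Matrix.vandermonde x) c) := by
    ext i j
    by_cases h : i = b
    · subst h
      have := congrArg (Polynomial.eval t) (interp_pow x hinj j j.2)
      simp only [eval_finsetSum, eval_mul, eval_C, eval_pow, eval_X] at this
      simp only [Matrix.vandermonde_apply, Function.update_self, Matrix.updateRow_self,
        Finset.sum_apply, Pi.smul_apply, smul_eq_mul]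
      rw [← this]
      exact Finset.sum_congr rfl (fun _ _ => mul_comm _ _)
    · simp [Matrix.vandermonde_apply, h]
  rw [hrow, Matrix.det_updateRow_sum, smul_eq_mul, abs_mul] at hup
  exact le_of_mul_le_mul_right (by simpa using hup) (abs_pos.mpr hpos)

open Polynomial in
lemma exists_nodes (m : ℕ) (hm : 2 ≤ m) : ∃ x γ : Fin m → ℝ,
    (∀ b, |x b| ≤ 1) ∧ (∀ b, |x b - m * γ b| ≤ (m:ℝ)^2 + m + 1) ∧
    (∀ s, 1 ≤ s → s < m → ∑ b, (x b ^ s - s * γ b * x b ^ (s-1)) = 0) ∧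
    ∑ b, (x b ^ m - m * γ b * x b ^ (m-1)) = - (m * (4 / 2 ^ m)) := by
  obtain ⟨x, hinj, hx, hl⟩ := exists_fekete m
  set l := fun b => Lagrange.basis Finset.univ x b with hldef
  set d := fun b => (l b).coeff (m-1) with hd
  set g := fun b => ∑ c, ∫ t in (0:ℝ)..(x c), (l b).eval t with hg
  have hdb : ∀ b, |d b| ≤ 2 ^ (m - 2) := by
    intro b
    have hdeg : (l b).degree ≤ ((m - 1 : ℕ) : WithBot ℕ) := by
      have := Lagrange.degree_basis (s := Finset.univ) (v := x) hinj.injOn (Finset.mem_univ b)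
      simp only [Finset.card_univ, Fintype.card_fin] at this
      exact this.le
    have h1 := Polynomial.Chebyshev.coeff_le_of_forall_abs_le_one hdeg (hl b)
    have h2 := Polynomial.Chebyshev.coeff_le_of_forall_abs_le_one (P := - l b) (n := m-1)
      (by rwa [degree_neg]) (by intro t ht; rw [eval_neg, abs_neg]; exact hl b t ht)
    rw [coeff_neg] at h2
    have e : m - 1 - 1 = m - 2 := by omega
    rw [e] at h1 h2
    exact abs_le.mpr ⟨by simp only [hd]; linarith, h1⟩
  have hgb : ∀ b, |g b| ≤ m := by
    intro b
    have : ∀ c ∈ Finset.univ, |∫ t in (0:ℝ)..(x c), (l b).eval t| ≤ 1 := by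
      intro c _
      have h := intervalIntegral.norm_integral_le_of_norm_le_const (a := 0) (b := x c) (C := 1)
        (f := fun t => (l b).eval t) (by
          intro t ht
          apply hl b t
          have hc := abs_le.mp (hx c)
          rw [Set.mem_uIoc] at ht
          constructor <;> rcases ht with h | h <;> linarith [h.1, h.2])
      rw [Real.norm_eq_abs] at h
      have := hx c
      simp at h
      linarith
    calc |g b| ≤ ∑ c, |∫ t in (0:ℝ)..(x c), (l b).eval t| := Finset.abs_sum_le_sum_abs _ _
      _ ≤ ∑ c : Fin m, (1:ℝ) := Finset.sum_le_sum this
      _ = m := by simp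
  have hgs : ∀ s, s < m → ∑ b, g b * x b ^ s = ∑ c, x c ^ (s+1) / (s+1) := by
    intro s hs
    simp only [hg, Finset.sum_mul]
    rw [Finset.sum_comm]
    refine Finset.sum_congr rfl (fun c _ => ?_)
    have : ∀ t, t ^ s = ∑ b, (l b).eval t * x b ^ s := by
      intro t
      have := congrArg (Polynomial.eval t) (interp_pow x hinj s hs)
      simp only [eval_finsetSum, eval_mul, eval_C, eval_pow, eval_X] at this
      rw [← this]
      exact Finset.sum_congr rfl (fun _ _ => mul_comm _ _)
    have h2 : ∫ t in (0:ℝ)..(x c), t ^ s = x c ^ (s+1) / (s+1) := by simp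
    rw [← h2]
    rw [intervalIntegral.integral_congr (fun t _ => this t)]
    rw [intervalIntegral.integral_finsetSum]
    · refine Finset.sum_congr rfl (fun b _ => ?_)
      rw [intervalIntegral.integral_mul_const]
    · intro b _
      apply Continuous.intervalIntegrable
      exact ((l b).continuous).mul continuous_const
  have hds : ∀ s, s < m → ∑ b, d b * x b ^ s = if s = m - 1 then 1 else 0 := by
    intro s hs
    have := congrArg (fun p => Polynomial.coeff p (m-1)) (interp_pow x hinj s hs)
    simp only [finsetSum_coeff, coeff_C_mul, coeff_X_pow] at this
    simp only [hd]
    rw [Finset.sum_congr rfl (fun b _ => mul_comm _ _), this]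
    simp [eq_comm]
  have key : ∀ s, 1 ≤ s → s ≤ m →
      ∑ b, (x b ^ s - s * (g b + 4 / 2 ^ m * d b) * x b ^ (s-1)) =
        - (s * (4 / 2 ^ m * if s = m then 1 else 0)) := by
    intro s hs1 hsm
    obtain ⟨r, rfl⟩ : ∃ r, s = r + 1 := ⟨s - 1, by omega⟩
    have h1 := hgs r (by omega)
    have h2 := hds r (by omega)
    have e : (r = m - 1) ↔ (r + 1 = m) := by omega
    simp only [e] at h2
    rw [← h2]
    simp only [Nat.add_sub_cancel]
    have h3 : ∑ c, x c ^ (r+1) = ((r+1 : ℕ) : ℝ) * ∑ b, g b * x b ^ r := by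
      rw [h1, Finset.mul_sum]
      refine Finset.sum_congr rfl (fun c _ => ?_)
      push_cast
      field_simp
    rw [Finset.sum_sub_distrib, h3, Finset.mul_sum, Finset.mul_sum, Finset.mul_sum,
      ← Finset.sum_sub_distrib, ← Finset.sum_neg_distrib]
    refine Finset.sum_congr rfl (fun c _ => ?_)
    ring
  refine ⟨x, fun b => g b + 4 / 2 ^ m * d b, hx, ?_, ?_, ?_⟩
  · intro b
    have h1 := abs_le.mp (hdb b)
    have h2 := abs_le.mp (hgb b)
    have h3 := abs_le.mp (hx b)
    have h4 : |4 / 2 ^ m * d b| ≤ 1 := by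
      rw [abs_mul, abs_of_pos (by positivity : (0:ℝ) < 4 / 2 ^ m)]
      have : (2:ℝ)^m = 4 * 2 ^ (m-2) := by
        obtain ⟨r, rfl⟩ : ∃ r, m = r + 2 := ⟨m - 2, by omega⟩
        simp [pow_add]; ring
      rw [this]
      calc _ ≤ 4 / (4 * 2 ^ (m-2)) * (2:ℝ) ^ (m-2) := by gcongr; exact hdb b
        _ = 1 := by field_simp
    have h5 : |(m:ℝ) * (g b + 4 / 2 ^ m * d b)| ≤ m * (m + 1) := by
      rw [abs_mul, Nat.abs_cast]
      gcongr
      exact (abs_add_le _ _).trans (add_le_add (hgb b) h4)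
    have := abs_sub (x b) ((m:ℝ) * (g b + 4 / 2 ^ m * d b))
    have h6 := hx b
    have h7 := abs_le.mp h5
    rw [abs_le]
    constructor <;> nlinarith
  · intro s h1 h2
    rw [key s h1 h2.le, if_neg h2.ne]
    simp
  · rw [key m (by omega) le_rfl]
    simp

lemma num_bound (m : ℕ) (hm : 2 ≤ m) :
    ((m:ℝ)^2 + m + 1) ^ m ≤ 4 * (m:ℝ) ^ (2 * m) := by
  rcases hm.eq_or_lt with rfl | h
  · norm_num
  · have hm0 : (3:ℝ) ≤ m := by exact_mod_cast h
    have h1 : (m:ℝ)^2 + m + 1 ≤ m^2 * Real.exp (4 / (3 * m)) := by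
      have := Real.add_one_le_exp (4 / (3 * (m:ℝ)))
      calc (m:ℝ)^2 + m + 1 ≤ m^2 * (4 / (3 * (m:ℝ)) + 1) := by
            have : (m:ℝ)^2 * (4 / (3 * (m:ℝ)) + 1) = m * 4 / 3 + m^2 := by field_simp
            rw [this]; linarith
        _ ≤ _ := by gcongr
    have h2 : Real.exp (4/3) ≤ 4 := by
      have h3 : Real.exp (4/3) ^ 3 = Real.exp 1 ^ 4 := by
        rw [← Real.exp_nat_mul, ← Real.exp_nat_mul]; norm_num
      have h4 : Real.exp 1 ^ 4 ≤ 2.8 ^ 4 := by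
        gcongr; linarith [Real.exp_one_lt_d9]
      refine le_of_pow_le_pow_left₀ (n := 3) (by norm_num) (by norm_num) ?_
      rw [h3]; refine h4.trans ?_; norm_num
    calc _ ≤ ((m:ℝ)^2 * Real.exp (4 / (3 * m))) ^ m := by gcongr
      _ = Real.exp (4/3) * (m:ℝ)^(2*m) := by
        rw [mul_pow, ← pow_mul, ← Real.exp_nat_mul, mul_comm]
        congr 2
        field_simp
      _ ≤ _ := by gcongr

lemma orbit_sum {m : ℕ} (S : Finset (Fin m)) (u v : ℝ) :
    ∑ i0 : Fin m, ∏ i ∈ S, (u - if i = i0 then v else 0) =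
      m * u ^ S.card - S.card * v * u ^ (S.card - 1) := by
  have h : ∀ i0 : Fin m, ∏ i ∈ S, (u - if i = i0 then v else 0) =
      u ^ S.card - if i0 ∈ S then v * u ^ (S.card - 1) else 0 := by
    intro i0
    by_cases hi : i0 ∈ S
    · rw [← Finset.mul_prod_erase S _ hi, if_pos hi, if_pos rfl]
      rw [Finset.prod_congr rfl (g := fun _ => u)]
      · rw [Finset.prod_const, Finset.card_erase_of_mem hi]
        have : S.card = (S.card - 1) + 1 := by
          have := Finset.card_pos.mpr ⟨_, hi⟩
          omega
        conv_rhs => rw [this]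
        simp only [Nat.add_sub_cancel]
        ring
      · intro i hi'
        rw [if_neg (Finset.ne_of_mem_erase hi'), sub_zero]
    · rw [if_neg hi, sub_zero, Finset.prod_congr rfl (g := fun _ => u), Finset.prod_const]
      intro i hi'
      rw [if_neg (by rintro rfl; exact hi hi'), sub_zero]
  simp_rw [h]
  rw [Finset.sum_sub_distrib]
  simp
  ring

lemma exists_centered (m : ℕ) (hm : 2 ≤ m) : ∃ w : Fin m → Fin (m ^ 2) → ℝ,
    (∀ i j, |w i j| ≤ 1/2) ∧
    (∀ S : Finset (Fin m), 1 ≤ S.card → S.card < m → ∑ j, ∏ i ∈ S, w i j = 0) ∧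
    ∑ j, ∏ i, w i j =
      - ((m:ℝ)^2 * (4 / 2 ^ m) * (1 / (2 * ((m:ℝ)^2 + m + 1))) ^ m) := by
  obtain ⟨x, γ, hx, hα, h0, htop⟩ := exists_nodes m hm
  set M : ℝ := (m:ℝ)^2 + m + 1 with hM
  have hMpos : 1 ≤ M := by
    have : (0:ℝ) ≤ (m:ℝ)^2 + m := by positivity
    linarith
  let e : Fin (m ^ 2) ≃ Fin m × Fin m := (finCongr (pow_two m)).trans finProdFinEquiv.symm
  let w : Fin m → Fin (m ^ 2) → ℝ := fun i j =>
    1 / (2 * M) * (x (e j).1 - if i = (e j).2 then m * γ (e j).1 else 0)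
  have hsum : ∀ S : Finset (Fin m), ∑ j, ∏ i ∈ S, w i j =
      (1 / (2 * M)) ^ S.card * (m * ∑ b, (x b ^ S.card - S.card * γ b * x b ^ (S.card - 1))) := by
    intro S
    have : ∀ j, ∏ i ∈ S, w i j = (fun p : Fin m × Fin m => (1 / (2 * M)) ^ S.card *
        ∏ i ∈ S, (x p.1 - if i = p.2 then m * γ p.1 else 0)) (e j) := by
      intro j
      simp only [w]
      rw [Finset.prod_mul_distrib, Finset.prod_const]
    rw [Finset.sum_congr rfl (fun j _ => this j)]
    rw [Equiv.sum_comp e (fun p : Fin m × Fin m => (1 / (2 * M)) ^ S.card *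
        ∏ i ∈ S, (x p.1 - if i = p.2 then m * γ p.1 else 0)), Fintype.sum_prod_type]
    simp only
    simp_rw [← Finset.mul_sum, orbit_sum]
    congr 1
    rw [Finset.mul_sum]
    refine Finset.sum_congr rfl (fun b _ => ?_)
    ring
  refine ⟨w, ?_, ?_, ?_⟩
  · intro i j
    simp only [w]
    rw [abs_mul, abs_of_pos (by positivity : 0 < 1 / (2 * M))]
    have : |x (e j).1 - if i = (e j).2 then m * γ (e j).1 else 0| ≤ M := by
      split_ifs
      · exact hα _
      · rw [sub_zero]; exact (hx _).trans hMpos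
    calc _ ≤ 1 / (2 * M) * M := by gcongr
      _ = 1/2 := by field_simp
  · intro S h1 h2
    rw [hsum, h0 _ h1 h2]
    simp
  · rw [hsum]
    simp only [Finset.card_univ, Fintype.card_fin]
    rw [htop]
    ring

/-- for `m ≥ 1` with `m + 1` prime, there is a marginals matrix
`W ∈ [0,1]^{m × m²}` such that the mixture of `m²` product distributions with uniform
mixing weights matches the uniform distribution on all moments of degree less than `m`,
while its top-degree moment differs from `2^{-m}` by at least `(2m)^{-2m}`. -/
theorem stmt_17 (m : ℕ) (hm : 1 ≤ m) (hp : Nat.Prime (m + 1)) :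
    ∃ W : Fin m → Fin (m ^ 2) → ℝ,
      (∀ i j, W i j ∈ Set.Icc (0:ℝ) 1) ∧
      (∀ S : Finset (Fin m), S.card < m →
        ∑ j, (1 / (m ^ 2 : ℝ)) * ∏ i ∈ S, W i j = (1/2 : ℝ) ^ S.card) ∧
      (1 / (2 * (m : ℝ))) ^ (2 * m)
        ≤ |∑ j, (1 / (m ^ 2 : ℝ)) * ∏ i, W i j - (1/2 : ℝ) ^ m| := by
  rcases hm.eq_or_lt with rfl | hm2
  · refine ⟨fun _ _ => 1, by simp, ?_, ?_⟩
    · intro S hS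
      have : S.card = 0 := by omega
      simp [this]
    · simp
      norm_num [abs_of_pos]
  obtain ⟨w, hw, h0, htop⟩ := exists_centered m hm2
  have hm0 : (0:ℝ) < m := by exact_mod_cast hm
  have expand : ∀ S : Finset (Fin m), ∑ j, (1 / (m ^ 2 : ℝ)) * ∏ i ∈ S, (w i j + 1/2) =
      ∑ T ∈ S.powerset, (1 / (m ^ 2 : ℝ)) * (1/2) ^ (S \ T).card * ∑ j, ∏ i ∈ T, w i j := by
    intro S
    simp_rw [Finset.prod_add, Finset.mul_sum]
    rw [Finset.sum_comm]
    refine Finset.sum_congr rfl (fun T _ => Finset.sum_congr rfl (fun j _ => ?_))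
    rw [Finset.prod_const]
    ring
  have hempty : ∑ j : Fin (m^2), ∏ i ∈ (∅ : Finset (Fin m)), w i j = (m:ℝ)^2 := by simp
  refine ⟨fun i j => w i j + 1/2, ?_, ?_, ?_⟩
  · intro i j
    have := abs_le.mp (hw i j)
    constructor <;> linarith
  · intro S hS
    rw [expand, Finset.sum_eq_single ∅]
    · rw [hempty]
      simp
      field_simp
    · intro T hT hne
      have hc := Finset.card_le_card (Finset.mem_powerset.mp hT)
      rw [h0 T (Finset.card_pos.mpr (Finset.nonempty_iff_ne_empty.mpr hne)) (by omega), mul_zero]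
    · simp
  · rw [expand, ← Finset.add_sum_erase _ _ (Finset.mem_powerset_self _),
      Finset.sum_eq_single (∅ : Finset (Fin m))]
    · rw [hempty, htop]
      have hb := num_bound m hm2
      have e1 : 1 / (m:ℝ) ^ 2 * (1 / 2) ^ (Finset.univ \ Finset.univ : Finset (Fin m)).card *
          -((m:ℝ) ^ 2 * (4 / 2 ^ m) * (1 / (2 * ((m:ℝ) ^ 2 + m + 1))) ^ m) +
          1 / (m:ℝ) ^ 2 * (1 / 2) ^ (Finset.univ \ ∅ : Finset (Fin m)).card * (m:ℝ) ^ 2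
          - (1 / 2) ^ m = - ((4 / 2 ^ m) * (1 / (2 * ((m:ℝ) ^ 2 + m + 1))) ^ m) := by
        simp only [sdiff_self, Finset.bot_eq_empty, Finset.card_empty, Finset.sdiff_empty,
          Finset.card_univ, Fintype.card_fin]
        field_simp
        ring
      rw [e1, abs_neg, abs_of_pos (by positivity)]
      have e2 : (1 / (2 * (m:ℝ))) ^ (2 * m) = 4 / (2 ^ m * 2 ^ m * (4 * (m:ℝ) ^ (2 * m))) := by
        rw [div_pow, mul_pow, pow_mul 2 2 m, ← mul_pow 2 2 m, one_pow]
        norm_num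
        field_simp
      have e3 : (4 / 2 ^ m) * (1 / (2 * ((m:ℝ) ^ 2 + m + 1))) ^ m =
          4 / (2 ^ m * 2 ^ m * ((m:ℝ)^2 + m + 1) ^ m) := by
        rw [div_pow, mul_pow, one_pow]
        field_simp
      rw [e2, e3]
      gcongr
    · intro T hT hne
      have hTu := Finset.ne_of_mem_erase hT
      have hlt : T.card < m := by
        have := Finset.card_lt_card (Finset.ssubset_univ_iff.mpr hTu)
        simpa using this
      rw [h0 T (Finset.card_pos.mpr (Finset.nonempty_iff_ne_empty.mpr hne)) hlt, mul_zero]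
    · intro h
      exfalso
      apply h
      rw [Finset.mem_erase]
      refine ⟨?_, by simp⟩
      intro h'
      have := congrArg Finset.card h'
      simp at this
      omega
end
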